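/- Let d ≥ 1 and let R be a reduced crystallographic root system spanning ℝ^d, with Weyl group W(R) ⊆ O(d) and determinant character ε. Let W(R) act on ℝ^{d+1} = ℝ^d ⊕ ℝ by w·(v, x) = (w(v), ε(w)·x), giving an embedding W(R) ⊆ O(d+1) and hence an action on polynomials in d+1 variables. Then in ℤ⟦t⟧ one has ∑_{n≥0} dim( H_n(ℝ^{d+1})^{W(R)} ) tⁿ = (1 + t^{1 + |R|/2})·P_R(t), where P_R(t) = ∑_{n≥0} dim( Pol_n(ℝ^d)^{W(R)} ) tⁿ, harmonic polynomials on ℝ^{d+1} are taken with respect to the standard Laplacian in d+1 variables, and |R| is the number of roots. -/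

import Mathlib

open MvPolynomial

noncomputable section

/-- The action of an (invertible) matrix `g` on polynomial functions on `ℝ^ι`, given by
`(g · P)(x) = P (g⁻¹ x)`; concretely, substitute `X i ↦ ∑ j (g⁻¹) i j • X j`. -/
def matrixAct {ι : Type} [Fintype ι] [DecidableEq ι] (g : Matrix ι ι ℝ) :
    MvPolynomial ι ℝ →ₗ[ℝ] MvPolynomial ι ℝ :=
  (aeval (R := ℝ) fun i => ∑ j, C (g⁻¹ i j) * X j).toLinearMap

/-- The standard Laplace operator `Δ = ∑ i ∂²/∂x_i²` on polynomials. -/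
def laplacian {ι : Type} [Fintype ι] [DecidableEq ι] :
    MvPolynomial ι ℝ →ₗ[ℝ] MvPolynomial ι ℝ :=
  ∑ i, (pderiv i).toLinearMap ∘ₗ (pderiv i).toLinearMap

/-- `Pol_n(ℝ^ι)^Γ`: the `Γ`-invariant homogeneous polynomials of degree `n`. -/
def polInv {ι : Type} [Fintype ι] [DecidableEq ι] (Γ : Set (Matrix ι ι ℝ)) (n : ℕ) :
    Submodule ℝ (MvPolynomial ι ℝ) :=
  homogeneousSubmodule ι ℝ n ⊓ ⨅ g ∈ Γ, LinearMap.eqLocus (matrixAct g) LinearMap.id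

/-- `H_n(ℝ^ι)^Γ`: the `Γ`-invariant harmonic homogeneous polynomials of degree `n`. -/
def harmInv {ι : Type} [Fintype ι] [DecidableEq ι] (Γ : Set (Matrix ι ι ℝ)) (n : ℕ) :
    Submodule ℝ (MvPolynomial ι ℝ) :=
  homogeneousSubmodule ι ℝ n ⊓ LinearMap.ker laplacian ⊓
    ⨅ g ∈ Γ, LinearMap.eqLocus (matrixAct g) LinearMap.id

/-- The standard Euclidean inner product on `ℝ^d`. -/
def dotP {d : ℕ} (x y : Fin d → ℝ) : ℝ := ∑ i, x i * y i

/-- The orthogonal reflection `s_α` in the hyperplane orthogonal to `α`. -/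
def rootReflection {d : ℕ} (α x : Fin d → ℝ) : Fin d → ℝ :=
  x - (2 * dotP x α / dotP α α) • α

/-- The Weyl group `W(R)`: the subgroup generated by the reflections `s_α`, `α ∈ R`. -/
def weylGroup {d : ℕ} (R : Finset (Fin d → ℝ)) : Subgroup (Matrix (Fin d) (Fin d) ℝ)ˣ :=
  Subgroup.closure
    {g | ∃ α ∈ R, ∀ x : Fin d → ℝ, (↑g : Matrix (Fin d) (Fin d) ℝ).mulVec x = rootReflection α x}

/-- `W(R)`, as a set of matrices. -/
def weylSet {d : ℕ} (R : Finset (Fin d → ℝ)) : Set (Matrix (Fin d) (Fin d) ℝ) :=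
  {m | ∃ g ∈ weylGroup R, m = (↑g : Matrix (Fin d) (Fin d) ℝ)}

/-- The extension of `g ∈ O(d)` to `ℝ^{d+1} = ℝ^d ⊕ ℝ` acting by `g` on `ℝ^d` and by
`det g` (the determinant character) on the extra coordinate. -/
def extMatrix {d : ℕ} (g : Matrix (Fin d) (Fin d) ℝ) :
    Matrix (Fin d ⊕ Unit) (Fin d ⊕ Unit) ℝ :=
  Matrix.fromBlocks g 0 0 (Matrix.of fun _ _ => g.det)

/-- The image of `W(R)` in `O(d+1)` under `w ↦ (w, ε(w))`, as a set of matrices. -/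
def extWeylSet {d : ℕ} (R : Finset (Fin d → ℝ)) :
    Set (Matrix (Fin d ⊕ Unit) (Fin d ⊕ Unit) ℝ) :=
  {m | ∃ g ∈ weylGroup R, m = extMatrix (↑g : Matrix (Fin d) (Fin d) ℝ)}

abbrev actA {ι : Type} [Fintype ι] (M : Matrix ι ι ℝ) :
    MvPolynomial ι ℝ →ₐ[ℝ] MvPolynomial ι ℝ :=
  aeval (R := ℝ) fun i => ∑ j, C (M i j) * X j

lemma matrixAct_eq {ι : Type} [Fintype ι] [DecidableEq ι] (g : Matrix ι ι ℝ)
    (P : MvPolynomial ι ℝ) : matrixAct g P = actA g⁻¹ P := rfl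

lemma actA_mul {ι : Type} [Fintype ι] (M N : Matrix ι ι ℝ) (P : MvPolynomial ι ℝ) :
    actA M (actA N P) = actA (N * M) P := by
  have : (actA M).comp (actA N) = actA (N * M) := by
    apply MvPolynomial.algHom_ext
    intro i
    simp only [actA, AlgHom.comp_apply, aeval_X, map_sum, map_mul, algHom_C,
      Matrix.mul_apply, Finset.mul_sum, Finset.sum_mul, algebraMap_eq]
    rw [Finset.sum_comm]
    refine Finset.sum_congr rfl fun j _ => Finset.sum_congr rfl fun k _ => by ring
  exact DFunLike.congr_fun this P

lemma actA_one {ι : Type} [Fintype ι] [DecidableEq ι] (P : MvPolynomial ι ℝ) :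
    actA (1 : Matrix ι ι ℝ) P = P := by
  have : actA (1 : Matrix ι ι ℝ) = AlgHom.id ℝ _ := by
    apply MvPolynomial.algHom_ext
    intro i
    simp [actA, Matrix.one_apply]
  rw [this]; rfl

lemma actA_hom {ι : Type} [Fintype ι] (M : Matrix ι ι ℝ) {P : MvPolynomial ι ℝ} {n : ℕ}
    (hP : P.IsHomogeneous n) : (actA M P).IsHomogeneous n := by
  have := hP.aeval (fun i => ∑ j, C (M i j) * X j) (n := 1) (fun i =>
    IsHomogeneous.sum _ _ _ fun j _ => isHomogeneous_C_mul_X _ _)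
  simpa using this

lemma pderiv_actA {ι : Type} [Fintype ι] [DecidableEq ι] (M : Matrix ι ι ℝ)
    (P : MvPolynomial ι ℝ) (i : ι) :
    pderiv i (actA M P) = ∑ k, C (M k i) * actA M (pderiv k P) := by
  induction P using MvPolynomial.induction_on with
  | C a => simp [actA]
  | add p q hp hq => simp only [map_add, hp, hq, mul_add, Finset.sum_add_distrib]
  | mul_X p j h =>
    have h2 : pderiv i (actA M (X j)) = C (M j i) := by
      simp [actA, pderiv_C_mul, Pi.single_apply]
    have h3 : ∀ k, C (M k i) * actA M (pderiv k (X j : MvPolynomial ι ℝ)) =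
        if k = j then C (M j i) else 0 := by
      intro k
      by_cases hk : k = j
      · subst hk; simp
      · rw [pderiv_X_of_ne (Ne.symm hk)]; simp [hk]
    rw [map_mul, pderiv_mul, h, h2]
    simp only [pderiv_mul, map_add, map_mul, mul_add, Finset.sum_add_distrib]
    congr 1
    · rw [Finset.sum_mul]; exact Finset.sum_congr rfl fun k _ => by ring
    · have : ∀ k, C (M k i) * (actA M p * actA M (pderiv k (X j : MvPolynomial ι ℝ))) =
        actA M p * if k = j then C (M j i) else 0 := by
        intro k; rw [← h3]; ring
      rw [Finset.sum_congr rfl fun k _ => this k, ← Finset.mul_sum]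
      simp

lemma laplacian_apply {ι : Type} [Fintype ι] [DecidableEq ι] (P : MvPolynomial ι ℝ) :
    laplacian P = ∑ i, pderiv i (pderiv i P) := by
  simp [laplacian]

lemma laplacian_actA {ι : Type} [Fintype ι] [DecidableEq ι] (M : Matrix ι ι ℝ)
    (hM : M * M.transpose = 1) (P : MvPolynomial ι ℝ) :
    laplacian (actA M P) = actA M (laplacian P) := by
  simp only [laplacian_apply, pderiv_actA, map_sum, pderiv_C_mul, Finset.mul_sum]
  have key : ∀ k l, ∑ i, C (M k i) * (C (M l i) * actA M (pderiv l (pderiv k P))) =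
      if k = l then actA M (pderiv l (pderiv k P)) else 0 := by
    intro k l
    have := congrFun (congrFun hM k) l
    rw [Matrix.mul_apply, Matrix.one_apply] at this
    simp only [Matrix.transpose_apply] at this
    simp only [← mul_assoc, ← C_mul, ← Finset.sum_mul, ← map_sum, this]
    split_ifs <;> simp
  rw [Finset.sum_comm]
  refine Finset.sum_congr rfl fun k _ => ?_
  rw [Finset.sum_comm, Finset.sum_congr rfl fun l _ => key k l]
  simp

lemma pderiv_comm' {ι : Type} (i j : ι) (P : MvPolynomial ι ℝ) :
    pderiv i (pderiv j P) = pderiv j (pderiv i P) := by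
  classical
  ext m
  simp only [coeff_pderiv]
  by_cases h : i = j
  · subst h; rfl
  · rw [add_right_comm]
    simp [Finsupp.single_apply, h, Ne.symm h]
    ring

lemma laplacian_hom {ι : Type} [Fintype ι] [DecidableEq ι] {P : MvPolynomial ι ℝ} {n : ℕ}
    (hP : P.IsHomogeneous n) : (laplacian P).IsHomogeneous (n - 2) := by
  rw [laplacian_apply]
  exact IsHomogeneous.sum _ _ _ fun i _ => hP.pderiv.pderiv

lemma pderiv_hom_zero {ι : Type} {P : MvPolynomial ι ℝ} (i : ι)
    (hP : P.IsHomogeneous 0) : pderiv i P = 0 := by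
  rw [← totalDegree_zero_iff_isHomogeneous, totalDegree_eq_zero_iff_eq_C] at hP
  rw [hP]; simp

lemma laplacian_hom_zero {ι : Type} [Fintype ι] [DecidableEq ι] {P : MvPolynomial ι ℝ} {n : ℕ}
    (hP : P.IsHomogeneous n) (hn : n < 2) : laplacian P = 0 := by
  rw [laplacian_apply]
  refine Finset.sum_eq_zero fun i _ => pderiv_hom_zero _ ?_
  have := hP.pderiv (i := i)
  have h0 : n - 1 = 0 := by omega
  rwa [h0] at this

section cauchy
variable {d : ℕ}

/-- restriction to the hyperplane -/
abbrev rho (d : ℕ) : MvPolynomial (Fin d ⊕ Unit) ℝ →ₐ[ℝ] MvPolynomial (Fin d) ℝ :=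
  aeval (Sum.elim X (fun _ => 0))

abbrev rinl (d : ℕ) : MvPolynomial (Fin d) ℝ →ₐ[ℝ] MvPolynomial (Fin d ⊕ Unit) ℝ :=
  rename Sum.inl

abbrev dx (d : ℕ) := pderiv (R := ℝ) (Sum.inr () : Fin d ⊕ Unit)

lemma rho_rinl (f : MvPolynomial (Fin d) ℝ) : rho d (rinl d f) = f := by
  rw [rho, rinl, aeval_rename]
  have : (Sum.elim X (fun _ => 0) : Fin d ⊕ Unit → MvPolynomial (Fin d) ℝ) ∘ Sum.inl = X := rfl
  rw [this, aeval_X_left]; rfl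

lemma rho_hom {P : MvPolynomial (Fin d ⊕ Unit) ℝ} {n : ℕ}
    (hP : P.IsHomogeneous n) : (rho d P).IsHomogeneous n := by
  have := hP.aeval (Sum.elim X (fun _ => 0) : Fin d ⊕ Unit → MvPolynomial (Fin d) ℝ) (n := 1)
    (fun i => by
      rcases i with i | i
      · exact isHomogeneous_X _ _
      · exact isHomogeneous_zero _ _ _)
  simpa using this

lemma rho_pderiv (P : MvPolynomial (Fin d ⊕ Unit) ℝ) (j : Fin d) :
    rho d (pderiv (Sum.inl j) P) = pderiv j (rho d P) := by
  have := aeval_sumElim_pderiv_inl (R := ℝ) (S := ℝ) P (fun _ => 0) j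
  have h : (C ∘ fun _ => 0 : Unit → MvPolynomial (Fin d) ℝ) = fun _ => 0 := by ext; simp
  rwa [h] at this

lemma laplacian_sum (P : MvPolynomial (Fin d ⊕ Unit) ℝ) :
    laplacian P = (∑ i : Fin d, pderiv (Sum.inl i) (pderiv (Sum.inl i) P)) + dx d (dx d P) := by
  simp [laplacian_apply, Fintype.sum_sum_type]

lemma rho_laplacian (P : MvPolynomial (Fin d ⊕ Unit) ℝ) :
    rho d (laplacian P) = laplacian (rho d P) + rho d (dx d (dx d P)) := by
  rw [laplacian_sum, map_add, map_sum, laplacian_apply]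
  simp only [rho_pderiv]

lemma eq_zero_of_dx {P : MvPolynomial (Fin d ⊕ Unit) ℝ} (h : dx d P = 0) (h0 : rho d P = 0) :
    P = 0 := by
  have hv : (↑P.vars : Set (Fin d ⊕ Unit)) ⊆ Set.range Sum.inl := by
    intro v hv
    rcases v with i | i
    · exact ⟨i, rfl⟩
    · exfalso
      rw [Finset.mem_coe, mem_vars_iff_mem_support] at hv
      obtain ⟨m, hm, hi⟩ := hv
      rw [Finsupp.mem_support_iff] at hi
      have h1 := congrArg (coeff (m - Finsupp.single (Sum.inr ()) 1)) h
      rw [coeff_pderiv, Finsupp.sub_add_single_one_cancel hi, coeff_zero] at h1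
      rcases mul_eq_zero.1 h1 with h2 | h2
      · exact (mem_support_iff.1 hm) h2
      · have : (0 : ℝ) ≤ ((m - Finsupp.single (Sum.inr ()) 1 : Fin d ⊕ Unit →₀ ℕ) (Sum.inr ()) : ℝ) := by
          positivity
        linarith
  obtain ⟨Q, rfl⟩ := exists_rename_eq_of_vars_subset_range P Sum.inl Sum.inl_injective hv
  have := rho_rinl Q
  rw [rinl, h0] at this
  rw [← this]; simp

lemma cauchy_unique (n : ℕ) : ∀ {P : MvPolynomial (Fin d ⊕ Unit) ℝ}, P.IsHomogeneous n →
    laplacian P = 0 → rho d P = 0 → rho d (dx d P) = 0 → P = 0 := by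
  induction n with
  | zero => intro P hP _ h0 _; exact eq_zero_of_dx (pderiv_hom_zero _ hP) h0
  | succ n ih =>
    intro P hP hL h0 h1
    refine eq_zero_of_dx (ih hP.pderiv ?_ h1 ?_) h0
    · have : dx d (laplacian P) = 0 := by rw [hL]; simp
      rw [laplacian_apply] at this ⊢
      rw [map_sum] at this
      rw [← this]
      refine Finset.sum_congr rfl fun i _ => ?_
      rw [pderiv_comm' i (Sum.inr ()) P, pderiv_comm' i (Sum.inr ())]
    · have := rho_laplacian P
      rw [hL, h0] at this
      simpa using this.symm

/-- divided power of the last variable -/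
def dp (d j : ℕ) : MvPolynomial (Fin d ⊕ Unit) ℝ :=
  C ((j.factorial : ℝ)⁻¹) * X (Sum.inr ()) ^ j

lemma dx_dp (j : ℕ) : dx d (dp d (j + 1)) = dp d j := by
  simp only [dp, dx, pderiv_C_mul, pderiv_pow, pderiv_X_self, Nat.factorial_succ]
  have : (C (((j + 1) * j.factorial : ℕ) : ℝ)⁻¹ : MvPolynomial (Fin d ⊕ Unit) ℝ) * ((j + 1 : ℕ) : MvPolynomial (Fin d ⊕ Unit) ℝ) = C ((j.factorial : ℝ)⁻¹) := by
    have h : ((j + 1 : ℕ) : MvPolynomial (Fin d ⊕ Unit) ℝ) = C ((j + 1 : ℕ) : ℝ) := by simp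
    rw [h, ← C_mul]
    congr 1
    push_cast
    field_simp
  rw [← this]
  simp only [Nat.add_sub_cancel]
  ring

lemma dx_dp_zero : dx d (dp d 0) = 0 := by simp [dp]

lemma dx_rinl (f : MvPolynomial (Fin d) ℝ) : dx d (rinl d f) = 0 := by
  induction f using MvPolynomial.induction_on with
  | C a => simp
  | add p q hp hq => simp only [map_add, hp, hq, add_zero]
  | mul_X p j h =>
    rw [map_mul, pderiv_mul, h]
    simp

lemma pderiv_dp (i : Fin d) (j : ℕ) : pderiv (Sum.inl i) (dp d j) = 0 := by
  simp [dp, pderiv_pow, pderiv_C_mul]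

lemma pderiv_dp_mul (i : Fin d) (j : ℕ) (f : MvPolynomial (Fin d) ℝ) :
    pderiv (Sum.inl i) (dp d j * rinl d f) = dp d j * rinl d (pderiv i f) := by
  rw [pderiv_mul, pderiv_dp, pderiv_rename Sum.inl_injective]; simp

lemma dx_dp_mul (j : ℕ) (f : MvPolynomial (Fin d) ℝ) :
    dx d (dp d (j + 1) * rinl d f) = dp d j * rinl d f := by
  rw [pderiv_mul, dx_dp, dx_rinl]; simp

lemma dx_dp_mul_zero (f : MvPolynomial (Fin d) ℝ) :
    dx d (dp d 0 * rinl d f) = 0 := by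
  rw [pderiv_mul, dx_dp_zero, dx_rinl]; simp

lemma laplacian_dp_mul (j : ℕ) (f : MvPolynomial (Fin d) ℝ) :
    laplacian (dp d j * rinl d f) = dp d j * rinl d (laplacian f) + dx d (dx d (dp d j * rinl d f)) := by
  rw [laplacian_sum]
  simp only [pderiv_dp_mul, laplacian_apply, map_sum, Finset.mul_sum]

lemma rho_dp (j : ℕ) (f : MvPolynomial (Fin d) ℝ) :
    rho d (dp d j * rinl d f) = if j = 0 then f else 0 := by
  rw [map_mul, rho_rinl]
  split_ifs with h
  · subst h; simp [dp]
  · simp [dp, h]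

/-- Cauchy-Kovalevskaya extension, truncated -/
def ckext (d N j : ℕ) : MvPolynomial (Fin d) ℝ →ₗ[ℝ] MvPolynomial (Fin d ⊕ Unit) ℝ :=
  ∑ k ∈ Finset.range N, ((-1 : ℝ) ^ k) •
    (LinearMap.mulLeft ℝ (dp d (2 * k + j)) ∘ₗ (rinl d).toLinearMap ∘ₗ (laplacian ^ k))

lemma ext_apply (N j : ℕ) (f : MvPolynomial (Fin d) ℝ) :
    ckext d N j f = ∑ k ∈ Finset.range N, ((-1 : ℝ) ^ k) •
      (dp d (2 * k + j) * rinl d ((laplacian ^ k) f)) := by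
  simp [ckext]

lemma dp_hom (j : ℕ) : (dp d j).IsHomogeneous j := isHomogeneous_C_mul_X_pow _ _ _

lemma term_hom (k : ℕ) : ∀ (j n : ℕ) {f : MvPolynomial (Fin d) ℝ}, f.IsHomogeneous n →
    (dp d (2 * k + j) * rinl d ((laplacian ^ k) f)).IsHomogeneous (n + j) := by
  induction k with
  | zero =>
    intro j n f hf
    have := (dp_hom (d := d) j).mul (hf.rename_isHomogeneous (f := (Sum.inl : Fin d → Fin d ⊕ Unit)))
    rw [add_comm] at this
    simpa using this
  | succ k ih =>
    intro j n f hf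
    rw [pow_succ, Module.End.mul_apply]
    by_cases hn : n < 2
    · rw [laplacian_hom_zero hf hn]; simp [isHomogeneous_zero]
    · have := ih (j + 2) _ (laplacian_hom hf)
      convert this using 1
      · congr 2; ring
      · omega

lemma ext_hom (N j n : ℕ) {f : MvPolynomial (Fin d) ℝ} (hf : f.IsHomogeneous n) :
    (ckext d N j f).IsHomogeneous (n + j) := by
  rw [ext_apply]
  refine IsHomogeneous.sum _ _ _ fun k _ => ?_
  exact (homogeneousSubmodule _ ℝ (n + j)).smul_mem _ (term_hom k j n hf)

lemma lap_ext_aux (N j : ℕ) (hj : j < 2) (f : MvPolynomial (Fin d) ℝ) :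
    laplacian (ckext d (N + 1) j f) = ((-1 : ℝ) ^ N) •
      (dp d (2 * N + j) * rinl d ((laplacian ^ (N + 1)) f)) := by
  induction N with
  | zero =>
    rw [ext_apply]
    simp only [Finset.sum_range_succ, Finset.range_zero, Finset.sum_empty, pow_zero, one_smul, zero_add,
      mul_zero, pow_one, Module.End.one_apply, laplacian_dp_mul]
    interval_cases j
    · rw [dx_dp_mul_zero]; simp
    · rw [dx_dp_mul, dx_dp_mul_zero]; simp
  | succ N ih =>
    rw [ext_apply, Finset.sum_range_succ, ← ext_apply, map_add, ih, map_smul, laplacian_dp_mul]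
    have e : 2 * (N + 1) + j = 2 * N + j + 1 + 1 := by ring
    rw [e, dx_dp_mul, dx_dp_mul, ← Module.End.mul_apply, ← pow_succ']
    rw [pow_succ (-1 : ℝ) N]
    simp

lemma lap_pow_zero (k : ℕ) : ∀ {n : ℕ} {f : MvPolynomial (Fin d) ℝ}, f.IsHomogeneous n →
    n < 2 * k → (laplacian ^ k) f = 0 := by
  induction k with
  | zero => intro n f _ h; omega
  | succ k ih =>
    intro n f hf hn
    rw [pow_succ, Module.End.mul_apply]
    by_cases h : n < 2
    · rw [laplacian_hom_zero hf h]; simp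
    · exact ih (laplacian_hom hf) (by omega)

lemma lap_ext (N j n : ℕ) (hj : j < 2) {f : MvPolynomial (Fin d) ℝ} (hf : f.IsHomogeneous n)
    (hN : n ≤ N) : laplacian (ckext d (N + 1) j f) = 0 := by
  rw [lap_ext_aux N j hj, lap_pow_zero (N + 1) hf (by omega)]; simp

lemma rho_ext (N j : ℕ) (f : MvPolynomial (Fin d) ℝ) :
    rho d (ckext d (N + 1) j f) = if j = 0 then f else 0 := by
  rw [ext_apply, map_sum, Finset.sum_eq_single 0]
  · rw [map_smul, rho_dp]; simp
  · intro k _ hk; rw [map_smul, rho_dp, if_neg (by omega)]; simp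
  · simp

lemma rho_dx_ext (N j : ℕ) (f : MvPolynomial (Fin d) ℝ) :
    rho d (dx d (ckext d (N + 1) j f)) = if j = 1 then f else 0 := by
  rw [ext_apply, map_sum, map_sum, Finset.sum_eq_single 0]
  · rw [Derivation.map_smul, map_smul]
    rcases j with _ | j
    · rw [dx_dp_mul_zero]; simp
    · rw [← add_assoc, dx_dp_mul, rho_dp]; simp
  · intro k _ hk
    obtain ⟨m, hm⟩ : ∃ m, 2 * k + j = m + 1 + 1 := ⟨2 * k + j - 2, by omega⟩
    rw [Derivation.map_smul, map_smul, hm, dx_dp_mul, rho_dp]; simp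
  · simp

lemma rho_actA (M : Matrix (Fin d) (Fin d) ℝ) (P : MvPolynomial (Fin d ⊕ Unit) ℝ) :
    rho d (actA (extMatrix M) P) = actA M (rho d P) := by
  have : (rho d).comp (actA (extMatrix M)) = (actA M).comp (rho d) := by
    apply MvPolynomial.algHom_ext
    rintro (i | i)
    · simp [actA, rho, extMatrix]
    · simp [actA, rho, extMatrix]
  exact DFunLike.congr_fun this P

lemma rho_dx_actA (M : Matrix (Fin d) (Fin d) ℝ) (P : MvPolynomial (Fin d ⊕ Unit) ℝ) :
    rho d (dx d (actA (extMatrix M) P)) = M.det • actA M (rho d (dx d P)) := by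
  rw [pderiv_actA, Fintype.sum_sum_type]
  simp only [extMatrix, Matrix.fromBlocks_apply₁₂, Matrix.fromBlocks_apply₂₂, Matrix.zero_apply,
    C_0, zero_mul, Finset.sum_const_zero, zero_add, Finset.univ_unique, Finset.sum_singleton,
    Matrix.of_apply]
  rw [← extMatrix, map_mul, rho_actA, ← C_mul']
  simp

lemma extMatrix_mul (M N : Matrix (Fin d) (Fin d) ℝ) :
    extMatrix (M * N) = extMatrix M * extMatrix N := by
  simp only [extMatrix, Matrix.fromBlocks_multiply]
  congr 1
  · simp
  · simp
  · simp
  · ext; simp [Matrix.mul_apply]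

lemma extMatrix_transpose (M : Matrix (Fin d) (Fin d) ℝ) :
    (extMatrix M).transpose = extMatrix M.transpose := by
  simp [extMatrix, Matrix.fromBlocks_transpose, Matrix.det_transpose]
  rfl

lemma extMatrix_one : extMatrix (1 : Matrix (Fin d) (Fin d) ℝ) = 1 := by
  rw [extMatrix, ← Matrix.fromBlocks_one]
  congr 1
  ext; simp

end cauchy

section roots
variable {d : ℕ}

def lin (α : Fin d → ℝ) : MvPolynomial (Fin d) ℝ := ∑ j, C (α j) * X j

lemma lin_hom (α : Fin d → ℝ) : (lin α).IsHomogeneous 1 :=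
  IsHomogeneous.sum _ _ _ fun j _ => isHomogeneous_C_mul_X _ _

lemma lin_add (α β : Fin d → ℝ) : lin (α + β) = lin α + lin β := by
  simp [lin, add_mul, Finset.sum_add_distrib]

lemma lin_smul (c : ℝ) (β : Fin d → ℝ) : lin (c • β) = c • lin β := by
  simp only [lin, Pi.smul_apply, smul_eq_mul, C_mul, Finset.smul_sum, ← C_mul', mul_assoc]

lemma lin_neg (β : Fin d → ℝ) : lin (-β) = - lin β := by
  rw [← neg_one_smul ℝ β, lin_smul, neg_one_smul]

lemma lin_eq (α : Fin d → ℝ) : lin α = sumSMulX (Finsupp.equivFunOnFinite.symm α) := by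
  rw [sumSMulX, Finsupp.linearCombination_apply, Finsupp.sum_fintype _ _ (by simp)]
  simp [lin, C_mul']

lemma lin_coeff (α : Fin d → ℝ) (i : Fin d) : (lin α).coeff (Finsupp.single i 1) = α i := by
  rw [lin_eq, coeff_sumSMulX]; rfl

lemma lin_inj {α β : Fin d → ℝ} (h : lin α = lin β) : α = β := by
  ext i; rw [← lin_coeff α i, h, lin_coeff]

lemma lin_ne_zero {α : Fin d → ℝ} (h : α ≠ 0) : lin α ≠ 0 := by
  intro h'
  apply h
  apply lin_inj
  rw [h']; simp [lin]

lemma lin_prime {α : Fin d → ℝ} (h : α ≠ 0) : Prime (lin α) := by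
  rw [← UniqueFactorizationMonoid.irreducible_iff_prime, lin_eq]
  obtain ⟨i, hi⟩ := Function.ne_iff.1 h
  apply irreducible_sumSMulX
  · exact ⟨i, by simpa using hi⟩
  · intro r hr
    rw [isUnit_iff_ne_zero]
    rintro rfl
    have := hr i
    rw [zero_dvd_iff] at this
    exact hi (by simpa using this)

/-- homogeneity of quotients -/
lemma hom_quot {D Q : MvPolynomial (Fin d) ℝ} {N m : ℕ} (hD : D.IsHomogeneous N) (hD0 : D ≠ 0)
    (h : (D * Q).IsHomogeneous m) : Q = 0 ∨ (N ≤ m ∧ Q.IsHomogeneous (m - N)) := by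
  let _ := MvPolynomial.gradedAlgebra (σ := Fin d) (R := ℝ)
  have h1 := DirectSum.decompose_of_mem_same (homogeneousSubmodule (Fin d) ℝ) h
  by_cases hN : N ≤ m
  · right
    refine ⟨hN, ?_⟩
    rw [DirectSum.coe_decompose_mul_of_left_mem_of_le (homogeneousSubmodule (Fin d) ℝ) hD hN] at h1
    rw [← mul_left_cancel₀ hD0 h1]
    exact (mem_homogeneousSubmodule _ _).1 (Subtype.prop _)
  · left
    rw [DirectSum.coe_decompose_mul_of_left_mem_of_not_le (homogeneousSubmodule (Fin d) ℝ) hD hN] at h1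
    exact (mul_eq_zero.1 h1.symm).resolve_left hD0

lemma lin_dvd {α β : Fin d → ℝ} (hα : α ≠ 0) (h : lin α ∣ lin β) : ∃ t : ℝ, β = t • α := by
  obtain ⟨q, hq⟩ := h
  have hb := lin_hom β
  rw [hq] at hb
  have : ∃ c, q = C c := by
    rcases hom_quot (lin_hom α) (lin_ne_zero hα) hb with h | ⟨_, h⟩
    · exact ⟨0, by simp [h]⟩
    · rw [Nat.sub_self, ← totalDegree_zero_iff_isHomogeneous, totalDegree_eq_zero_iff_eq_C] at h
      exact ⟨_, h⟩
  obtain ⟨c, rfl⟩ := this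
  refine ⟨c, lin_inj ?_⟩
  rw [hq, lin_smul, ← C_mul', mul_comm]

def reflMat (α : Fin d → ℝ) : Matrix (Fin d) (Fin d) ℝ :=
  1 + Matrix.replicateCol Unit ((-2 / dotP α α) • α) * Matrix.replicateRow Unit α

lemma reflMat_apply (α : Fin d → ℝ) (i j : Fin d) :
    reflMat α i j = (if i = j then 1 else 0) - 2 / dotP α α * α i * α j := by
  simp [reflMat, Matrix.mul_apply, Matrix.one_apply]
  ring

lemma dotP_pos {α : Fin d → ℝ} (h : α ≠ 0) : 0 < dotP α α := by
  obtain ⟨i, hi⟩ := Function.ne_iff.1 h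
  exact Finset.sum_pos' (fun j _ => mul_self_nonneg _) ⟨i, Finset.mem_univ _, mul_self_pos.2 hi⟩

lemma dotP_comm (α β : Fin d → ℝ) : dotP α β = dotP β α := by
  simp [dotP, mul_comm]

lemma reflMat_neg (α : Fin d → ℝ) : reflMat (-α) = reflMat α := by
  ext i j
  have : dotP (-α) (-α) = dotP α α := by simp [dotP]
  rw [reflMat_apply, reflMat_apply, this]
  simp

lemma reflMat_det {α : Fin d → ℝ} (h : α ≠ 0) : (reflMat α).det = -1 := by
  have := (dotP_pos h).ne'
  rw [reflMat, Matrix.det_one_add_replicateCol_mul_replicateRow]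
  have e : α ⬝ᵥ ((-2 / dotP α α) • α) = (-2 / dotP α α) * dotP α α := by
    rw [dotProduct_smul]; rfl
  rw [e]; field_simp; norm_num

lemma reflMat_mulVec (α x : Fin d → ℝ) : (reflMat α).mulVec x = rootReflection α x := by
  ext i
  simp only [Matrix.mulVec, dotProduct, reflMat_apply, rootReflection, Pi.sub_apply, Pi.smul_apply,
    sub_mul, Finset.sum_sub_distrib, smul_eq_mul, ite_mul, one_mul, zero_mul, Finset.sum_ite_eq,
    Finset.mem_univ, if_true]
  have : ∑ j, 2 / dotP α α * α i * α j * x j = 2 / dotP α α * α i * dotP x α := by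
    rw [dotP.eq_def x α, Finset.mul_sum]; exact Finset.sum_congr rfl fun j _ => by ring
  rw [this]; ring

lemma rootReflection_invol {α : Fin d → ℝ} (h : α ≠ 0) (x : Fin d → ℝ) :
    rootReflection α (rootReflection α x) = x := by
  have h0 := (dotP_pos h).ne'
  have : dotP (rootReflection α x) α = - dotP x α := by
    have : dotP (rootReflection α x) α = dotP x α - (2 * dotP x α / dotP α α) * dotP α α := by
      simp only [dotP, rootReflection, Pi.sub_apply, Pi.smul_apply, smul_eq_mul, sub_mul,
        Finset.sum_sub_distrib, Finset.mul_sum, mul_assoc]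
    rw [this]; field_simp; ring
  rw [rootReflection, this, rootReflection]
  ext i
  simp
  ring

lemma rootReflection_self {α : Fin d → ℝ} (h : α ≠ 0) : rootReflection α α = -α := by
  have h0 := (dotP_pos h).ne'
  ext i
  simp only [rootReflection, Pi.sub_apply, Pi.smul_apply, Pi.neg_apply, smul_eq_mul]
  field_simp
  ring

lemma reflMat_orth {α : Fin d → ℝ} (h : α ≠ 0) : reflMat α * (reflMat α).transpose = 1 := by
  have e : (reflMat α).transpose = reflMat α := by
    ext i j
    rw [Matrix.transpose_apply, reflMat_apply, reflMat_apply]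
    simp only [eq_comm (a := i)]
    ring
  rw [e]
  apply Matrix.toLin'.injective
  apply LinearMap.ext
  intro x
  rw [Matrix.toLin'_mul, LinearMap.comp_apply, Matrix.toLin'_apply, Matrix.toLin'_apply,
    reflMat_mulVec, reflMat_mulVec, rootReflection_invol h]
  simp

lemma act_refl_X (α : Fin d → ℝ) (i : Fin d) :
    actA (reflMat α) (X i) = X i - C (2 / dotP α α * α i) * lin α := by
  simp only [actA, aeval_X, reflMat_apply, C_sub, sub_mul, Finset.sum_sub_distrib]
  congr 1
  · simp [apply_ite C]
  · rw [lin, Finset.mul_sum]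
    exact Finset.sum_congr rfl fun j _ => by rw [C_mul, mul_assoc]

lemma act_refl_lin (α β : Fin d → ℝ) :
    actA (reflMat α) (lin β) = lin (rootReflection α β) := by
  rw [rootReflection, sub_eq_add_neg, ← neg_smul, lin_add, lin_smul]
  conv_lhs => rw [lin]
  simp only [map_sum, map_mul, act_refl_X, algHom_C, mul_sub, Finset.sum_sub_distrib, algebraMap_eq]
  rw [← lin, sub_eq_add_neg, ← C_mul']
  congr 1
  simp only [← mul_assoc, ← C_mul, ← Finset.sum_mul, ← map_sum]
  rw [← neg_mul, ← C_neg]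
  congr 3
  rw [dotP.eq_def β α, Finset.mul_sum, Finset.sum_div]
  exact Finset.sum_congr rfl fun j _ => by ring

lemma act_refl_sub (α : Fin d → ℝ) (P : MvPolynomial (Fin d) ℝ) :
    lin α ∣ actA (reflMat α) P - P := by
  rw [← Ideal.mem_span_singleton, ← Ideal.Quotient.eq]
  have : (Ideal.Quotient.mkₐ ℝ (Ideal.span {lin α})).comp (actA (reflMat α)) =
      Ideal.Quotient.mkₐ ℝ (Ideal.span {lin α}) := by
    apply MvPolynomial.algHom_ext
    intro i
    rw [AlgHom.comp_apply, act_refl_X]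
    simp only [Ideal.Quotient.mkₐ_eq_mk]
    rw [Ideal.Quotient.eq, Ideal.mem_span_singleton]
    exact ⟨-C (2 / dotP α α * α i), by ring⟩
  exact DFunLike.congr_fun this P

lemma dvd_of_anti {α : Fin d → ℝ} {P : MvPolynomial (Fin d) ℝ}
    (h : actA (reflMat α) P = -P) : lin α ∣ P := by
  have := act_refl_sub α P
  rw [h] at this
  have e : P = C (-1/2) * (-P - P) := by
    have : (-P - P) = C (-2) * P := by
      have h2 : (C 2 : MvPolynomial (Fin d) ℝ) = 2 := map_ofNat C 2
      rw [C_neg, h2]; ring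
    rw [this, ← mul_assoc, ← C_mul]; norm_num
  rw [e]
  exact Dvd.dvd.mul_left this _

structure IsRoots (R : Finset (Fin d → ℝ)) : Prop where
  zero : (0 : Fin d → ℝ) ∉ R
  refl : ∀ α ∈ R, ∀ β ∈ R, rootReflection α β ∈ R
  red : ∀ α ∈ R, ∀ β ∈ R, (∃ t : ℝ, β = t • α) → β = α ∨ β = -α

variable {R : Finset (Fin d → ℝ)}

lemma IsRoots.ne (hR : IsRoots R) {α : Fin d → ℝ} (h : α ∈ R) : α ≠ 0 := by
  rintro rfl; exact hR.zero h

lemma IsRoots.neg (hR : IsRoots R) {α : Fin d → ℝ} (h : α ∈ R) : -α ∈ R := by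
  rw [← rootReflection_self (hR.ne h)]; exact hR.refl _ h _ h

open Classical in
def posR (R : Finset (Fin d → ℝ)) : Finset (Fin d → ℝ) := R.filter fun v => 0 < toLex v

lemma pos_neg {v : Fin d → ℝ} (h : v ≠ 0) : 0 < toLex (-v) ↔ ¬ 0 < toLex v := by
  have e : toLex (-v) = - toLex v := rfl
  have h' : toLex v ≠ 0 := fun h0 => h (by simpa using h0)
  rw [e]
  constructor
  · intro h1 h2; exact lt_asymm (neg_pos.1 h1) h2
  · intro h1; exact neg_pos.2 ((lt_or_gt_of_ne h').resolve_right h1)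

lemma mem_posR {R : Finset (Fin d → ℝ)} {v : Fin d → ℝ} :
    v ∈ posR R ↔ v ∈ R ∧ 0 < toLex v := by
  classical
  unfold posR; exact Finset.mem_filter

lemma prod_R {M : Type*} [CommMonoid M] (hR : IsRoots R) (f : (Fin d → ℝ) → M) :
    ∏ β ∈ R, f β = (∏ β ∈ posR R, f β) * ∏ β ∈ posR R, f (-β) := by
  classical
  have h0 : posR R = R.filter (fun v => 0 < toLex v) := by
    ext v; rw [mem_posR, Finset.mem_filter]
  have h1 : ∏ β ∈ R.filter (fun v => ¬ 0 < toLex v), f β = ∏ β ∈ posR R, f (-β) := by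
    refine Finset.prod_bij' (fun v _ => -v) (fun v _ => -v) ?_ ?_ ?_ ?_ ?_
    · intro v hv
      rw [Finset.mem_filter] at hv
      rw [mem_posR]
      exact ⟨hR.neg hv.1, (pos_neg (hR.ne hv.1)).2 hv.2⟩
    · intro v hv
      rw [mem_posR] at hv
      rw [Finset.mem_filter]
      refine ⟨hR.neg hv.1, ?_⟩
      rw [pos_neg (hR.ne hv.1), not_not]; exact hv.2
    · simp
    · simp
    · simp
  rw [← h1, h0, Finset.prod_filter_mul_prod_filter_not R (fun v => 0 < toLex v)]

lemma card_posR (hR : IsRoots R) : R.card = 2 * (posR R).card := by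
  have := prod_R hR (fun _ => Multiplicative.ofAdd (1 : ℕ))
  have := congrArg Multiplicative.toAdd this
  simp at this
  omega

def PiR (R : Finset (Fin d → ℝ)) : MvPolynomial (Fin d) ℝ := ∏ β ∈ posR R, lin β

lemma posR_sub {α : Fin d → ℝ} (h : α ∈ posR R) : α ∈ R := by
  rw [mem_posR] at h; exact h.1

lemma PiR_hom (R : Finset (Fin d → ℝ)) : (PiR R).IsHomogeneous (posR R).card := by
  have := IsHomogeneous.prod (posR R) (fun β => lin β) (fun _ => 1) fun β _ => lin_hom β
  simpa [PiR] using this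

lemma PiR_ne (hR : IsRoots R) : PiR R ≠ 0 :=
  Finset.prod_ne_zero_iff.2 fun _ h => lin_ne_zero (hR.ne (posR_sub h))

lemma pos_not_dvd (hR : IsRoots R) {α β : Fin d → ℝ} (hα : α ∈ posR R) (hβ : β ∈ posR R)
    (h : β ≠ α) : ¬ lin α ∣ lin β := by
  intro hd
  have hne := hR.ne (posR_sub hα)
  rcases hR.red α (posR_sub hα) β (posR_sub hβ) (lin_dvd hne hd) with h1 | h1
  · exact h h1
  · rw [mem_posR] at hα hβ
    rw [h1, pos_neg hne] at hβ
    exact hβ.2 hα.2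

lemma PiR_refl_sq (hR : IsRoots R) {α : Fin d → ℝ} (hα : α ∈ R) :
    actA (reflMat α) (PiR R) ^ 2 = PiR R ^ 2 := by
  have h1 : ∏ β ∈ R, lin β = (-1) ^ (posR R).card * PiR R ^ 2 := by
    rw [prod_R hR]
    simp only [lin_neg, Finset.prod_neg, PiR]
    ring
  have h2 : actA (reflMat α) (∏ β ∈ R, lin β) = ∏ β ∈ R, lin β := by
    rw [map_prod]
    simp only [act_refl_lin]
    have hne := hR.ne hα
    exact Finset.prod_bij' (fun v _ => rootReflection α v) (fun v _ => rootReflection α v)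
      (fun v hv => hR.refl _ hα _ hv) (fun v hv => hR.refl _ hα _ hv)
      (fun v _ => rootReflection_invol hne v) (fun v _ => rootReflection_invol hne v)
      (fun v _ => rfl)
  rw [h1, map_mul, map_pow, map_pow, map_neg, map_one] at h2
  exact mul_left_cancel₀ (pow_ne_zero _ (by norm_num)) h2

lemma PiR_refl_pos (hR : IsRoots R) {α : Fin d → ℝ} (hα : α ∈ posR R) :
    actA (reflMat α) (PiR R) = - PiR R := by
  classical
  have hne := hR.ne (posR_sub hα)
  rcases sq_eq_sq_iff_eq_or_eq_neg.1 (PiR_refl_sq hR (posR_sub hα)) with h | h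
  · exfalso
    have e : PiR R = lin α * ∏ β ∈ (posR R).erase α, lin β := (Finset.mul_prod_erase _ _ hα).symm
    rw [e, map_mul, act_refl_lin, rootReflection_self hne, lin_neg, neg_mul, ← mul_neg] at h
    have h2 := mul_left_cancel₀ (lin_ne_zero hne) h
    have h3 := dvd_of_anti (neg_eq_iff_eq_neg.1 h2)
    obtain ⟨β, hβ, h4⟩ := (lin_prime hne).exists_mem_finset_dvd h3
    rw [Finset.mem_erase] at hβ
    exact pos_not_dvd hR hα hβ.2 hβ.1 h4
  · exact h

lemma posR_or (hR : IsRoots R) {α : Fin d → ℝ} (hα : α ∈ R) : α ∈ posR R ∨ -α ∈ posR R := by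
  simp only [mem_posR]
  rw [pos_neg (hR.ne hα)]
  have := hR.neg hα
  tauto

lemma PiR_refl (hR : IsRoots R) {α : Fin d → ℝ} (hα : α ∈ R) :
    actA (reflMat α) (PiR R) = - PiR R := by
  rcases posR_or hR hα with h | h
  · exact PiR_refl_pos hR h
  · rw [← reflMat_neg]; exact PiR_refl_pos hR h

lemma PiR_dvd (hR : IsRoots R) {P : MvPolynomial (Fin d) ℝ}
    (h : ∀ α ∈ R, actA (reflMat α) P = -P) : PiR R ∣ P := by
  apply Finset.prod_dvd_of_isRelPrime
  · intro α hα β hβ hne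
    rw [Function.onFun, (lin_prime (hR.ne (posR_sub hα))).irreducible.isRelPrime_iff_not_dvd]
    exact pos_not_dvd hR hα hβ hne.symm
  · intro α hα
    exact dvd_of_anti (h α (posR_sub hα))

/-! Weyl group -/

lemma gen_eq {g : (Matrix (Fin d) (Fin d) ℝ)ˣ} {α : Fin d → ℝ}
    (h : ∀ x : Fin d → ℝ, (↑g : Matrix (Fin d) (Fin d) ℝ).mulVec x = rootReflection α x) :
    (↑g : Matrix (Fin d) (Fin d) ℝ) = reflMat α := by
  apply Matrix.toLin'.injective
  apply LinearMap.ext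
  intro x
  rw [Matrix.toLin'_apply, Matrix.toLin'_apply, h, reflMat_mulVec]

lemma refl_mem (hR : IsRoots R) {α : Fin d → ℝ} (hα : α ∈ R) :
    ∃ g ∈ weylGroup R, (↑g : Matrix (Fin d) (Fin d) ℝ) = reflMat α := by
  have h := reflMat_orth (hR.ne hα)
  refine ⟨⟨reflMat α, (reflMat α).transpose, h, mul_eq_one_comm.1 h⟩, ?_, rfl⟩
  exact Subgroup.subset_closure ⟨α, hα, fun x => reflMat_mulVec α x⟩

lemma weyl_orth (hR : IsRoots R) {g : (Matrix (Fin d) (Fin d) ℝ)ˣ} (hg : g ∈ weylGroup R) :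
    (↑g : Matrix (Fin d) (Fin d) ℝ) * (↑g : Matrix (Fin d) (Fin d) ℝ).transpose = 1 := by
  rw [weylGroup] at hg
  induction hg using Subgroup.closure_induction with
  | mem g hg =>
    obtain ⟨α, hα, h⟩ := hg
    rw [gen_eq h]; exact reflMat_orth (hR.ne hα)
  | one => simp
  | mul x y _ _ hx hy =>
    rw [Units.val_mul, Matrix.transpose_mul, Matrix.mul_assoc, ← Matrix.mul_assoc (↑y : Matrix (Fin d) (Fin d) ℝ),
      hy, Matrix.one_mul, hx]
  | inv x _ hx =>
    have : (↑x⁻¹ : Matrix (Fin d) (Fin d) ℝ) = (↑x : Matrix (Fin d) (Fin d) ℝ).transpose := by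
      rw [Matrix.coe_units_inv]; exact Matrix.inv_eq_right_inv hx
    rw [this, Matrix.transpose_transpose]
    exact mul_eq_one_comm.1 hx

lemma weyl_det (hR : IsRoots R) {g : (Matrix (Fin d) (Fin d) ℝ)ˣ} (hg : g ∈ weylGroup R) :
    (↑g : Matrix (Fin d) (Fin d) ℝ).det * (↑g : Matrix (Fin d) (Fin d) ℝ).det = 1 := by
  have := congrArg Matrix.det (weyl_orth hR hg)
  simpa using this

lemma PiR_weyl (hR : IsRoots R) {g : (Matrix (Fin d) (Fin d) ℝ)ˣ} (hg : g ∈ weylGroup R) :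
    actA (↑g : Matrix (Fin d) (Fin d) ℝ) (PiR R) =
      (↑g : Matrix (Fin d) (Fin d) ℝ).det • PiR R := by
  rw [weylGroup] at hg
  induction hg using Subgroup.closure_induction with
  | mem g hg =>
    obtain ⟨α, hα, h⟩ := hg
    rw [gen_eq h, PiR_refl hR hα, reflMat_det (hR.ne hα)]; simp
  | one => rw [Units.val_one, actA_one]; simp
  | mul x y _ _ hx hy =>
    rw [Units.val_mul, ← actA_mul, hx, map_smul, hy, smul_smul, Matrix.det_mul]
  | inv x hx' hx =>
    have h1 : actA (↑x⁻¹ : Matrix (Fin d) (Fin d) ℝ) (actA (↑x : Matrix (Fin d) (Fin d) ℝ) (PiR R))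
        = PiR R := by rw [actA_mul, Units.mul_inv, actA_one]
    rw [hx, map_smul] at h1
    have h2 : (↑x⁻¹ : Matrix (Fin d) (Fin d) ℝ).det * (↑x : Matrix (Fin d) (Fin d) ℝ).det = 1 := by
      rw [← Matrix.det_mul, Units.inv_mul, Matrix.det_one]
    conv_rhs => rw [← h1, smul_smul, h2, one_smul]

lemma mem_polInv {n : ℕ} {P : MvPolynomial (Fin d) ℝ} :
    P ∈ polInv (weylSet R) n ↔ P.IsHomogeneous n ∧
      ∀ g ∈ weylGroup R, actA (↑g : Matrix (Fin d) (Fin d) ℝ) P = P := by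
  simp only [polInv, weylSet, Submodule.mem_inf, Submodule.mem_iInf, mem_homogeneousSubmodule,
    LinearMap.mem_eqLocus, LinearMap.id_apply, matrixAct_eq]
  refine and_congr_right fun _ => ⟨fun h g hg => ?_, ?_⟩
  · have := h _ ⟨g⁻¹, inv_mem hg, rfl⟩
    rwa [← Matrix.coe_units_inv, inv_inv] at this
  · rintro h _ ⟨g, hg, rfl⟩
    rw [← Matrix.coe_units_inv]
    exact h _ (inv_mem hg)

lemma extMatrix_inv (g : (Matrix (Fin d) (Fin d) ℝ)ˣ) :
    (extMatrix (↑g : Matrix (Fin d) (Fin d) ℝ))⁻¹ = extMatrix (↑g⁻¹ : Matrix (Fin d) (Fin d) ℝ) := by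
  apply Matrix.inv_eq_right_inv
  rw [← extMatrix_mul, Units.mul_inv, extMatrix_one]

lemma mem_harmInv {n : ℕ} {P : MvPolynomial (Fin d ⊕ Unit) ℝ} :
    P ∈ harmInv (extWeylSet R) n ↔ (P.IsHomogeneous n ∧ laplacian P = 0) ∧
      ∀ g ∈ weylGroup R, actA (extMatrix (↑g : Matrix (Fin d) (Fin d) ℝ)) P = P := by
  simp only [harmInv, extWeylSet, Submodule.mem_inf, Submodule.mem_iInf, mem_homogeneousSubmodule,
    LinearMap.mem_eqLocus, LinearMap.id_apply, matrixAct_eq, LinearMap.mem_ker]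
  refine and_congr_right fun _ => ⟨fun h g hg => ?_, ?_⟩
  · have := h _ ⟨g⁻¹, inv_mem hg, rfl⟩
    rwa [extMatrix_inv, inv_inv] at this
  · rintro h _ ⟨g, hg, rfl⟩
    rw [extMatrix_inv]
    exact h _ (inv_mem hg)

/-- the space of second Cauchy data divided by `PiR` -/
def tgt (R : Finset (Fin d → ℝ)) (n : ℕ) : Submodule ℝ (MvPolynomial (Fin d) ℝ) :=
  if 1 + (posR R).card ≤ n then polInv (weylSet R) (n - (1 + (posR R).card)) else ⊥

lemma tgt_spec (hR : IsRoots R) {n : ℕ} {q : MvPolynomial (Fin d) ℝ} (hq : q ∈ tgt R n) :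
    (q = 0 ∨ ∃ m, m + 1 = n ∧ (PiR R * q).IsHomogeneous m) ∧
    ∀ g ∈ weylGroup R, actA (↑g : Matrix (Fin d) (Fin d) ℝ) (PiR R * q) =
      (↑g : Matrix (Fin d) (Fin d) ℝ).det • (PiR R * q) := by
  rw [tgt] at hq
  split_ifs at hq with h
  · rw [mem_polInv] at hq
    refine ⟨Or.inr ⟨n - 1, by omega, ?_⟩, fun g hg => ?_⟩
    · have := (PiR_hom R).mul hq.1
      convert this using 1
      omega
    · rw [map_mul, PiR_weyl hR hg, hq.2 g hg, smul_mul_assoc]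
  · rw [Submodule.mem_bot] at hq
    subst hq
    simp

lemma tgt_exists (hR : IsRoots R) {n m : ℕ} (hn : m + 1 = n) {h : MvPolynomial (Fin d) ℝ}
    (hh : h.IsHomogeneous m)
    (ha : ∀ g ∈ weylGroup R, actA (↑g : Matrix (Fin d) (Fin d) ℝ) h =
      (↑g : Matrix (Fin d) (Fin d) ℝ).det • h) : ∃ q ∈ tgt R n, PiR R * q = h := by
  have hdvd : PiR R ∣ h := by
    apply PiR_dvd hR
    intro α hα
    obtain ⟨g, hg, e⟩ := refl_mem hR hα
    have := ha g hg
    rw [e, reflMat_det (hR.ne hα)] at this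
    simpa using this
  obtain ⟨q, rfl⟩ := hdvd
  refine ⟨q, ?_, rfl⟩
  rcases hom_quot (PiR_hom R) (PiR_ne hR) hh with h0 | ⟨h1, h2⟩
  · subst h0; exact zero_mem _
  · rw [tgt, if_pos (by omega), mem_polInv]
    refine ⟨?_, fun g hg => ?_⟩
    · convert h2 using 1; omega
    · have := ha g hg
      rw [map_mul, PiR_weyl hR hg, smul_mul_assoc] at this
      have hd : (↑g : Matrix (Fin d) (Fin d) ℝ).det ≠ 0 := by
        intro h; have := weyl_det hR hg; simp [h] at this
      exact mul_left_cancel₀ (PiR_ne hR) (smul_right_injective _ hd this)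

def fullExt (R : Finset (Fin d → ℝ)) (n : ℕ) :
    (polInv (weylSet R) n × tgt R n) →ₗ[ℝ] MvPolynomial (Fin d ⊕ Unit) ℝ :=
  LinearMap.coprod (ckext d (n + 1) 0 ∘ₗ Submodule.subtype _)
    (ckext d (n + 1) 1 ∘ₗ LinearMap.mulLeft ℝ (PiR R) ∘ₗ Submodule.subtype _)

lemma fullExt_apply (n : ℕ) (x : polInv (weylSet R) n × tgt R n) :
    fullExt R n x = ckext d (n + 1) 0 x.1 + ckext d (n + 1) 1 (PiR R * x.2) := by
  simp [fullExt]

lemma rho_fullExt (n : ℕ) (x : polInv (weylSet R) n × tgt R n) :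
    rho d (fullExt R n x) = x.1 := by
  rw [fullExt_apply, map_add, rho_ext, rho_ext]; simp

lemma rho_dx_fullExt (n : ℕ) (x : polInv (weylSet R) n × tgt R n) :
    rho d (dx d (fullExt R n x)) = PiR R * x.2 := by
  rw [fullExt_apply, map_add, map_add, rho_dx_ext, rho_dx_ext]; simp

lemma fullExt_mem (hR : IsRoots R) (n : ℕ) (x : polInv (weylSet R) n × tgt R n) :
    fullExt R n x ∈ harmInv (extWeylSet R) n := by
  obtain ⟨f, q⟩ := x
  have hf := mem_polInv.1 f.2
  obtain ⟨hq1, hq2⟩ := tgt_spec hR q.2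
  have hhl : (fullExt R n (f, q)).IsHomogeneous n ∧ laplacian (fullExt R n (f, q)) = 0 := by
    rw [fullExt_apply, map_add, lap_ext n 0 n (by norm_num) hf.1 le_rfl]
    have h0 := ext_hom (n + 1) 0 n hf.1
    rcases hq1 with hq1 | ⟨m, hm, hq1⟩
    · simp only [hq1, mul_zero, map_zero, add_zero, and_true]
      exact h0
    · rw [lap_ext n 1 m (by norm_num) hq1 (by omega)]
      have h1 := ext_hom (n + 1) 1 m hq1
      rw [hm] at h1
      exact ⟨h0.add h1, by simp⟩
  rw [mem_harmInv]
  refine ⟨hhl, fun g hg => ?_⟩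
  rw [← sub_eq_zero]
  apply cauchy_unique n
  · exact (actA_hom _ hhl.1).sub hhl.1
  · rw [map_sub, laplacian_actA, hhl.2]
    · simp
    · rw [extMatrix_transpose, ← extMatrix_mul, weyl_orth hR hg, extMatrix_one]
  · rw [map_sub, rho_actA, rho_fullExt, hf.2 g hg, sub_self]
  · rw [map_sub, map_sub, rho_dx_actA, rho_dx_fullExt, hq2 g hg, smul_smul, weyl_det hR hg,
      one_smul, sub_self]

lemma harm_exists (hR : IsRoots R) (n : ℕ) {P : MvPolynomial (Fin d ⊕ Unit) ℝ}
    (hP : P ∈ harmInv (extWeylSet R) n) : ∃ x, fullExt R n x = P := by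
  obtain ⟨⟨h1, h2⟩, h3⟩ := mem_harmInv.1 hP
  have hf : rho d P ∈ polInv (weylSet R) n :=
    mem_polInv.2 ⟨rho_hom h1, fun g hg => by rw [← rho_actA, h3 g hg]⟩
  have hq : ∃ q ∈ tgt R n, PiR R * q = rho d (dx d P) := by
    rcases n with _ | m
    · exact ⟨0, zero_mem _, by rw [pderiv_hom_zero _ h1]; simp⟩
    · refine tgt_exists hR rfl (rho_hom h1.pderiv) fun g hg => ?_
      have := rho_dx_actA (↑g : Matrix (Fin d) (Fin d) ℝ) P
      rw [h3 g hg] at this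
      conv_rhs => rw [this, smul_smul, weyl_det hR hg, one_smul]
  obtain ⟨q, hq, e⟩ := hq
  refine ⟨(⟨_, hf⟩, ⟨q, hq⟩), ?_⟩
  obtain ⟨⟨k1, k2⟩, -⟩ := mem_harmInv.1 (fullExt_mem hR n (⟨_, hf⟩, ⟨q, hq⟩))
  rw [← sub_eq_zero]
  apply cauchy_unique n (k1.sub h1)
  · rw [map_sub, k2, h2, sub_self]
  · rw [map_sub, rho_fullExt, sub_self]
  · rw [map_sub, map_sub, rho_dx_fullExt, e, sub_self]

lemma finite_polInv (Γ : Set (Matrix (Fin d) (Fin d) ℝ)) (n : ℕ) :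
    Module.Finite ℝ (polInv Γ n) := by
  have h : FiniteDimensional ℝ (homogeneousSubmodule (Fin d) ℝ n) :=
    Module.Finite.of_fg (homogeneousSubmodule_fg (Fin d) ℝ n)
  exact Submodule.finiteDimensional_of_le (inf_le_left : polInv Γ n ≤ _)

lemma finrank_harm (hR : IsRoots R) (n : ℕ) :
    Module.finrank ℝ (harmInv (extWeylSet R) n) =
      Module.finrank ℝ (polInv (weylSet R) n) +
        if 1 + (posR R).card ≤ n then
          Module.finrank ℝ (polInv (weylSet R) (n - (1 + (posR R).card))) else 0 := by
  have e : (polInv (weylSet R) n × tgt R n) ≃ₗ[ℝ] harmInv (extWeylSet R) n := by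
    refine LinearEquiv.ofBijective ((fullExt R n).codRestrict _ (fullExt_mem hR n)) ⟨?_, ?_⟩
    · intro x y hxy
      have h : fullExt R n x = fullExt R n y := congrArg Subtype.val hxy
      have h1 := congrArg (rho d) h
      rw [rho_fullExt, rho_fullExt] at h1
      have h2 := congrArg (fun P => rho d (dx d P)) h
      simp only [rho_dx_fullExt] at h2
      exact Prod.ext (Subtype.ext h1) (Subtype.ext (mul_left_cancel₀ (PiR_ne hR) h2))
    · rintro ⟨P, hP⟩
      obtain ⟨x, hx⟩ := harm_exists hR n hP
      exact ⟨x, Subtype.ext hx⟩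
  have f1 := finite_polInv (weylSet R) n
  have f2 : Module.Finite ℝ (tgt R n) := by
    by_cases h : 1 + (posR R).card ≤ n
    · rw [tgt, if_pos h]; exact finite_polInv _ _
    · rw [tgt, if_neg h]; infer_instance
  rw [← e.finrank_eq, Module.finrank_prod]
  congr 1
  by_cases h : 1 + (posR R).card ≤ n
  · rw [tgt, if_pos h, if_pos h]
  · rw [tgt, if_neg h, if_neg h]; simp

end roots

/-- For a reduced crystallographic root system `R` spanning `ℝ^d`, with `W(R)` acting on
`ℝ^{d+1} = ℝ^d ⊕ ℝ` by `w · (v, x) = (w v, ε(w) x)`, the generating series of the dimensions of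
the `W(R)`-invariant harmonic polynomials on `ℝ^{d+1}` is `(1 + t^{1 + |R|/2}) P_R(t)`. -/
theorem statement1 {d : ℕ} (hd : 1 ≤ d) (R : Finset (Fin d → ℝ))
    (hzero : (0 : Fin d → ℝ) ∉ R)
    (hspan : Submodule.span ℝ (R : Set (Fin d → ℝ)) = ⊤)
    (hcrys : ∀ α ∈ R, ∀ β ∈ R, ∃ k : ℤ, 2 * dotP β α / dotP α α = (k : ℝ))
    (hrefl : ∀ α ∈ R, ∀ β ∈ R, rootReflection α β ∈ R)
    (hred : ∀ α ∈ R, {β | β ∈ R ∧ ∃ t : ℝ, β = t • α} = ({α, -α} : Set (Fin d → ℝ))) :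
    (PowerSeries.mk fun n => (Module.finrank ℝ ↥(harmInv (extWeylSet R) n) : ℤ)) =
      (1 + PowerSeries.X ^ (1 + R.card / 2)) *
        PowerSeries.mk fun n => (Module.finrank ℝ ↥(polInv (weylSet R) n) : ℤ) := by
  have hR : IsRoots R := by
    refine ⟨hzero, hrefl, fun α hα β hβ h => ?_⟩
    have h' : β ∈ {β | β ∈ R ∧ ∃ t : ℝ, β = t • α} := ⟨hβ, h⟩
    rw [hred α hα] at h'
    simpa using h'
  have hc : R.card / 2 = (posR R).card := by rw [card_posR hR]; omega
  ext n
  rw [PowerSeries.coeff_mk, finrank_harm hR n, hc, add_mul, one_mul, map_add, PowerSeries.coeff_mk,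
    PowerSeries.coeff_X_pow_mul']
  push_cast
  simp only [PowerSeries.coeff_mk]
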